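/- Let (K_{i(e)}, w_e, p_e)_{e∈E} be an irreducible and aperiodic contractive Markov system with average contracting rate 0 < a < 1 such that (K,d) is a complete metric space in which sets of finite diameter are relatively compact, K_1,…,K_N partition K into non-empty open subsets, each p_e restricted to K_{i(e)} is Dini-continuous, and there exists δ > 0 with p_e ≥ δ on K_{i(e)} for all e ∈ E. Let μ be its unique invariant Borel probability measure. Then Uⁿf(x) → ∫ f dμ for all x ∈ K and all bounded continuous f : K → ℝ, and the convergence is uniform on bounded subsets of K; in particular μ is an attractive probability measure of the system. -/

import Mathlib

open MeasureTheory Filter ENNReal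

/-- The modulus of uniform continuity of a real-valued function on a
(pseudo)metric space, valued in `ℝ≥0∞`. -/
noncomputable def modulus {X : Type*} [PseudoMetricSpace X] (h : X → ℝ) (t : ℝ) : ℝ≥0∞ :=
  ⨆ (x : X) (y : X) (_ : dist x y ≤ t), ENNReal.ofReal |h x - h y|

/-- A function is Dini-continuous if `∫_0^c φ(t)/t dt < ∞` for some `c > 0`,
where `φ` is its modulus of uniform continuity. -/
def DiniContinuous {X : Type*} [PseudoMetricSpace X] (h : X → ℝ) : Prop :=
  ∃ c > (0 : ℝ), ∫⁻ t in Set.Ioc (0 : ℝ) c, modulus h t / ENNReal.ofReal t < ⊤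

/-- A Markov system on a metric space `K`, with vertex set `Fin N` and edge set `E`. -/
structure MarkovSystem (K : Type*) [MetricSpace K] [MeasurableSpace K]
    (N : ℕ) (E : Type*) [Fintype E] where
  /-- initial vertex of an edge -/
  edgeI : E → Fin N
  /-- terminal vertex of an edge -/
  edgeT : E → Fin N
  /-- the partition `K_1, …, K_N` of `K` -/
  Ki : Fin N → Set K
  Ki_nonempty : ∀ v, (Ki v).Nonempty
  Ki_measurable : ∀ v, MeasurableSet (Ki v)
  Ki_disjoint : ∀ v v', v ≠ v' → Disjoint (Ki v) (Ki v')
  Ki_cover : ∀ x : K, ∃ v, x ∈ Ki v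
  /-- the maps `w_e` -/
  w : E → K → K
  w_measurable : ∀ e, Measurable (w e)
  w_mapsTo : ∀ e, Set.MapsTo (w e) (Ki (edgeI e)) (Ki (edgeT e))
  /-- the probability functions `p_e` -/
  p : E → K → ℝ
  p_measurable : ∀ e, Measurable (p e)
  p_nonneg : ∀ e x, 0 ≤ p e x
  p_sum_one : ∀ x : K, ∑ e, p e x = 1
  p_eq_zero : ∀ e, ∀ x : K, x ∉ Ki (edgeI e) → p e x = 0

namespace MarkovSystem

variable {K : Type*} [MetricSpace K] [MeasurableSpace K] {N : ℕ} {E : Type*} [Fintype E]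

/-- Condition of contractiveness on average with rate `a`. -/
def ContractiveOnAvg (sys : MarkovSystem K N E) (a : ℝ) : Prop :=
  ∀ v : Fin N, ∀ x ∈ sys.Ki v, ∀ y ∈ sys.Ki v,
    ∑ e, sys.p e x * dist (sys.w e x) (sys.w e y) ≤ a * dist x y

/-- `μ` is an invariant Borel probability measure of the Markov system:
`∫ Uf dμ = ∫ f dμ` for every bounded Borel measurable `f`. -/
def IsInvariant (sys : MarkovSystem K N E) (μ : Measure K) : Prop :=
  IsProbabilityMeasure μ ∧
  ∀ f : K → ℝ, Measurable f → (∃ B, ∀ x, |f x| ≤ B) →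
    ∫ x, (∑ e, sys.p e x * f (sys.w e x)) ∂μ = ∫ x, f x ∂μ

end MarkovSystem

/-- `wordProb w p (e₁ :: … :: eₖ) x = p_{e₁}(x) p_{e₂}(w_{e₁}x) ⋯ p_{eₖ}(w_{e_{k-1}} ∘ ⋯ ∘ w_{e₁}x)`. -/
def wordProb {K E : Type*} (w : E → K → K) (p : E → K → ℝ) : List E → K → ℝ
  | [], _ => 1
  | e :: l, x => p e x * wordProb w p l (w e x)

/-- `wordMap w (e₁ :: … :: eₖ) = w_{eₖ} ∘ ⋯ ∘ w_{e₁}`. -/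
def wordMap {K E : Type*} (w : E → K → K) : List E → K → K
  | [], x => x
  | e :: l, x => wordMap w l (w e x)

/-- `M` is the generalized Markov measure on `Σ = E^ℤ` associated with the Markov
system and the invariant measure `μ`. -/
def IsMarkovMeasure {K : Type*} [MetricSpace K] [MeasurableSpace K] {N : ℕ}
    {E : Type*} [Fintype E] [MeasurableSpace E]
    (sys : MarkovSystem K N E) (μ : Measure K) (M : Measure (ℤ → E)) : Prop :=
  IsProbabilityMeasure M ∧
  ∀ (m : ℤ) (es : List E),
    M {σ : ℤ → E | ∀ j : Fin es.length, σ (m + (j : ℕ)) = es.get j}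
      = ENNReal.ofReal (∫ x, wordProb sys.w sys.p es x ∂μ)

/-- The left shift on `E^ℤ`. -/
def shift {E : Type*} (σ : ℤ → E) : ℤ → E := fun k => σ (k + 1)

/-- `comps w σ m = w_{σ₀} ∘ w_{σ₋₁} ∘ ⋯ ∘ w_{σ₋ₘ}`. -/
def comps {K E : Type*} (w : E → K → K) (σ : ℤ → E) : ℕ → K → K
  | 0 => w (σ 0)
  | n + 1 => fun x => comps w σ n (w (σ (-((n : ℤ) + 1))) x)

/-- `F` is the coding map of the contractive Markov system:
`F(σ) = lim_{m → -∞} w_{σ₀} ∘ ⋯ ∘ w_{σₘ} x_{i(σₘ)}` for `M`-a.e. `σ`. -/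
def IsCodingMap {K : Type*} [MetricSpace K] [MeasurableSpace K] {N : ℕ}
    {E : Type*} [Fintype E] [MeasurableSpace E]
    (sys : MarkovSystem K N E) (M : Measure (ℤ → E)) (F : (ℤ → E) → K) : Prop :=
  Measurable F ∧ ∃ xs : Fin N → K, (∀ v, xs v ∈ sys.Ki v) ∧
    ∀ᵐ σ ∂M, Filter.Tendsto
      (fun m : ℕ => comps sys.w σ m (xs (sys.edgeI (σ (-(m : ℤ))))))
      Filter.atTop (nhds (F σ))

/-- Entropy of the finite measurable partition given by the fibers of `π`. -/
noncomputable def partEntropy {Ω : Type*} [MeasurableSpace Ω] (M : Measure Ω)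
    {F : Type*} [Fintype F] (π : Ω → F) : ℝ :=
  -∑ f : F, ((M (π ⁻¹' {f})).toReal * Real.log (M (π ⁻¹' {f})).toReal)

/-- The Kolmogorov–Sinai entropy of a measure-preserving transformation `S`
with respect to `M`: the supremum over all finite measurable partitions `π` of
`inf_n (1/n) H(⋁_{i=0}^{n-1} S^{-i} π)`. -/
noncomputable def ksEntropy {Ω : Type*} [MeasurableSpace Ω] (M : Measure Ω) (S : Ω → Ω) : ℝ≥0∞ :=
  ⨆ (k : ℕ) (π : Ω → Fin k) (_ : ∀ j, MeasurableSet (π ⁻¹' {j})),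
    ⨅ n : ℕ, ENNReal.ofReal (((n : ℝ) + 1)⁻¹ *
      partEntropy M (fun ω => fun j : Fin (n + 1) => π (S^[(j : ℕ)] ω)))

/-- `IsPath sys l` : the list of edges `l` is a directed path of the multigraph,
i.e. consecutive edges are composable. -/
def MarkovSystem.IsPath {K : Type*} [MetricSpace K] [MeasurableSpace K]
    {N : ℕ} {E : Type*} [Fintype E] (sys : MarkovSystem K N E) : List E → Prop
  | [] => True
  | [_] => True
  | e :: e' :: l => sys.edgeT e = sys.edgeI e' ∧ MarkovSystem.IsPath sys (e' :: l)

/-- The underlying directed multigraph is irreducible: any two vertices are joined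
by a directed path. -/
def MarkovSystem.Irreducible {K : Type*} [MetricSpace K] [MeasurableSpace K]
    {N : ℕ} {E : Type*} [Fintype E] (sys : MarkovSystem K N E) : Prop :=
  ∀ u v : Fin N, ∃ (l : List E) (h : l ≠ []),
    sys.IsPath l ∧ sys.edgeI (l.head h) = u ∧ sys.edgeT (l.getLast h) = v

/-- The set of lengths of directed cycles of the multigraph. -/
def MarkovSystem.cycleLengths {K : Type*} [MetricSpace K] [MeasurableSpace K]
    {N : ℕ} {E : Type*} [Fintype E] (sys : MarkovSystem K N E) : Set ℕ :=
  {n | ∃ (l : List E) (h : l ≠ []), sys.IsPath l ∧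
    sys.edgeT (l.getLast h) = sys.edgeI (l.head h) ∧ l.length = n}

/-- The multigraph is aperiodic: the greatest common divisor of the lengths of its
directed cycles is `1`. -/
def MarkovSystem.Aperiodic {K : Type*} [MetricSpace K] [MeasurableSpace K]
    {N : ℕ} {E : Type*} [Fintype E] (sys : MarkovSystem K N E) : Prop :=
  ∀ d : ℕ, (∀ n ∈ sys.cycleLengths, d ∣ n) → d = 1

/-- The Markov operator `U` acting on functions: `Uf = ∑_e p_e · (f ∘ w_e)`. -/
noncomputable def Uop {K : Type*} [MetricSpace K] [MeasurableSpace K]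
    {N : ℕ} {E : Type*} [Fintype E]
    (sys : MarkovSystem K N E) (f : K → ℝ) : K → ℝ :=
  fun x => ∑ e, sys.p e x * f (sys.w e x)

/-- The adjoint Markov operator `U*` on measures: `U*ν(f) = ∫ Uf dν`. -/
noncomputable def Ustar {K : Type*} [MetricSpace K] [MeasurableSpace K]
    {N : ℕ} {E : Type*} [Fintype E]
    (sys : MarkovSystem K N E) (ν : Measure K) : Measure K :=
  ∑ e : E, Measure.map (sys.w e) (ν.withDensity fun x => ENNReal.ofReal (sys.p e x))

namespace MarkovSystem

variable {K : Type*} [MetricSpace K] [MeasurableSpace K] {N : ℕ} {E : Type*} [Fintype E]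

section Graph

/-- `sys.Walk n u v` : there is a directed walk with `n` edges from `u` to `v`. -/
def Walk (sys : MarkovSystem K N E) : ℕ → Fin N → Fin N → Prop
  | 0, u, v => u = v
  | n + 1, u, v => ∃ e, sys.edgeI e = u ∧ sys.Walk n (sys.edgeT e) v

variable {sys : MarkovSystem K N E}

lemma Walk.trans {m n : ℕ} {u v z : Fin N} (h : sys.Walk m u v) (h' : sys.Walk n v z) :
    sys.Walk (m + n) u z := by
  induction m generalizing u with
  | zero => obtain rfl : u = v := h; simpa using h'
  | succ m ih =>
    obtain ⟨e, rfl, he⟩ := h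
    rw [Nat.succ_add]
    exact ⟨e, rfl, ih he⟩

lemma IsPath.walk {l : List E} (h : l ≠ []) (hl : sys.IsPath l) :
    sys.Walk l.length (sys.edgeI (l.head h)) (sys.edgeT (l.getLast h)) := by
  induction l with
  | nil => exact absurd rfl h
  | cons e l ih =>
    cases l with
    | nil => exact ⟨e, rfl, rfl⟩
    | cons e' l =>
      refine ⟨e, rfl, ?_⟩
      rw [hl.1, List.getLast_cons (List.cons_ne_nil e' l)]
      exact ih (List.cons_ne_nil e' l) hl.2

/-- The lengths of the closed walks at a vertex form a submonoid of `ℕ`. -/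
def closedWalkLengths (sys : MarkovSystem K N E) (v : Fin N) : AddSubmonoid ℕ where
  carrier := {n | sys.Walk n v v}
  zero_mem' := rfl
  add_mem' h h' := Walk.trans h h'

lemma Irreducible.exists_walk (hirred : sys.Irreducible) (u v : Fin N) :
    ∃ n, sys.Walk n u v := by
  obtain ⟨l, h, hl, rfl, rfl⟩ := hirred u v
  exact ⟨_, hl.walk h⟩

lemma Irreducible.eventually_walk (hirred : sys.Irreducible) (haper : sys.Aperiodic)
    (v : Fin N) : ∃ n₀, ∀ n ≥ n₀, sys.Walk n v v := by
  obtain ⟨n₀, hn₀⟩ := Nat.exists_mem_closure_of_ge (sys.closedWalkLengths v : Set ℕ)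
  refine ⟨n₀, fun n hn => ?_⟩
  have hgcd : Nat.setGcd (sys.closedWalkLengths v : Set ℕ) = 1 := by
    refine haper _ fun n hn => ?_
    obtain ⟨l, h, hl, hcyc, rfl⟩ := hn
    have hw := hl.walk h
    rw [hcyc] at hw
    obtain ⟨s, hs⟩ := hirred.exists_walk v (sys.edgeI (l.head h))
    obtain ⟨t, ht⟩ := hirred.exists_walk (sys.edgeI (l.head h)) v
    have h1 : Nat.setGcd (sys.closedWalkLengths v : Set ℕ) ∣ s + t :=
      Nat.setGcd_dvd_of_mem (hs.trans ht)
    have h2 : Nat.setGcd (sys.closedWalkLengths v : Set ℕ) ∣ s + l.length + t :=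
      Nat.setGcd_dvd_of_mem ((hs.trans hw).trans ht)
    have h3 : s + l.length + t = l.length + (s + t) := by ring
    rw [h3] at h2
    exact (Nat.dvd_add_left h1).1 h2
  have := hn₀ n hn (by simp [hgcd])
  rwa [AddSubmonoid.closure_eq] at this

/-- In an irreducible aperiodic multigraph any two vertices can be joined to a common vertex by
walks of the same length. -/
lemma Irreducible.exists_common_walk (hirred : sys.Irreducible) (haper : sys.Aperiodic)
    (u v : Fin N) : ∃ n z, sys.Walk n u z ∧ sys.Walk n v z := by
  obtain ⟨s, hs⟩ := hirred.exists_walk u v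
  obtain ⟨n₀, hn₀⟩ := hirred.eventually_walk haper v
  exact ⟨s + n₀, v, hs.trans (hn₀ n₀ le_rfl), hn₀ _ (Nat.le_add_left _ _)⟩

end Graph

section Averages

variable (sys : MarkovSystem K N E)

/-- The vertex whose cell contains `x`. -/
noncomputable def vert (x : K) : Fin N := (sys.Ki_cover x).choose

lemma mem_Ki_vert (x : K) : x ∈ sys.Ki (sys.vert x) := (sys.Ki_cover x).choose_spec

variable {sys}

lemma vert_eq {x : K} {v : Fin N} (h : x ∈ sys.Ki v) : sys.vert x = v := by
  by_contra hne
  exact Set.disjoint_left.1 (sys.Ki_disjoint _ _ hne) (sys.mem_Ki_vert x) h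

lemma vert_w {x : K} {e : E} (h : sys.vert x = sys.edgeI e) :
    sys.vert (sys.w e x) = sys.edgeT e :=
  vert_eq (sys.w_mapsTo e (h ▸ sys.mem_Ki_vert x))

lemma p_eq_zero_of_vert_ne {x : K} {e : E} (h : sys.vert x ≠ sys.edgeI e) : sys.p e x = 0 :=
  sys.p_eq_zero e x fun hx => h (vert_eq hx)

lemma le_p_of_vert_eq {δ : ℝ} (hδ : ∀ e, ∀ x ∈ sys.Ki (sys.edgeI e), δ ≤ sys.p e x)
    {x : K} {e : E} (h : sys.vert x = sys.edgeI e) : δ ≤ sys.p e x :=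
  hδ e x (h ▸ sys.mem_Ki_vert x)

lemma sum_p_mul_le_sum_p_mul {x : K} {g h : E → ℝ}
    (hgh : ∀ e, sys.vert x = sys.edgeI e → g e ≤ h e) :
    ∑ e, sys.p e x * g e ≤ ∑ e, sys.p e x * h e := by
  refine Finset.sum_le_sum fun e _ => ?_
  by_cases he : sys.vert x = sys.edgeI e
  · exact mul_le_mul_of_nonneg_left (hgh e he) (sys.p_nonneg e x)
  · simp [p_eq_zero_of_vert_ne he]

lemma sum_p_mul_const (x : K) (c : ℝ) : ∑ e, sys.p e x * c = c := by
  rw [← Finset.sum_mul, sys.p_sum_one, one_mul]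

lemma p_le_one (e : E) (x : K) : sys.p e x ≤ 1 := by
  rw [← sys.p_sum_one x]
  exact Finset.single_le_sum (fun e _ => sys.p_nonneg e x) (Finset.mem_univ e)

lemma ContractiveOnAvg.sum_le {a : ℝ} (hcontr : sys.ContractiveOnAvg a) {x y : K}
    (h : sys.vert x = sys.vert y) :
    ∑ e, sys.p e x * dist (sys.w e x) (sys.w e y) ≤ a * dist x y :=
  hcontr _ x (sys.mem_Ki_vert x) y (h ▸ sys.mem_Ki_vert y)

lemma ContractiveOnAvg.exists_edge {a : ℝ} (hcontr : sys.ContractiveOnAvg a) {x y : K}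
    (h : sys.vert x = sys.vert y) :
    ∃ e, sys.vert x = sys.edgeI e ∧ dist (sys.w e x) (sys.w e y) ≤ a * dist x y := by
  by_contra! hcon
  have hle := hcontr.sum_le h
  rw [← sum_p_mul_const (sys := sys) x (a * dist x y)] at hle
  have hlt : ∑ e, sys.p e x * (a * dist x y)
      < ∑ e, sys.p e x * dist (sys.w e x) (sys.w e y) := by
    obtain ⟨e, -, he⟩ := Finset.exists_ne_zero_of_sum_ne_zero
      (show ∑ e, sys.p e x ≠ 0 by rw [sys.p_sum_one]; exact one_ne_zero)
    have hv : sys.vert x = sys.edgeI e := by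
      by_contra hv
      exact he (p_eq_zero_of_vert_ne hv)
    refine Finset.sum_lt_sum (fun e' _ => ?_) ⟨e, Finset.mem_univ e, ?_⟩
    · by_cases he' : sys.vert x = sys.edgeI e'
      · exact mul_le_mul_of_nonneg_left (hcon e' he').le (sys.p_nonneg e' x)
      · simp [p_eq_zero_of_vert_ne he']
    · exact mul_lt_mul_of_pos_left (hcon e hv) (lt_of_le_of_ne (sys.p_nonneg e x) he.symm)
  exact absurd hle (not_le.2 hlt)

lemma ContractiveOnAvg.dist_w_le {a δ : ℝ} (hcontr : sys.ContractiveOnAvg a) (hδpos : 0 < δ)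
    (hδ : ∀ e, ∀ x ∈ sys.Ki (sys.edgeI e), δ ≤ sys.p e x) {x y : K}
    (h : sys.vert x = sys.vert y) {e : E} (he : sys.vert x = sys.edgeI e) :
    dist (sys.w e x) (sys.w e y) ≤ a / δ * dist x y := by
  have h1 : sys.p e x * dist (sys.w e x) (sys.w e y) ≤ a * dist x y :=
    (Finset.single_le_sum (f := fun e => sys.p e x * dist (sys.w e x) (sys.w e y))
      (fun e _ => mul_nonneg (sys.p_nonneg e x) dist_nonneg) (Finset.mem_univ e)).trans
      (hcontr.sum_le h)
  have h2 := mul_le_mul_of_nonneg_right (le_p_of_vert_eq hδ he)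
    (dist_nonneg (x := sys.w e x) (y := sys.w e y))
  rw [div_mul_eq_mul_div, le_div_iff₀ hδpos]
  linarith

variable (sys)

/-- A chosen point in each cell. -/
noncomputable def base (v : Fin N) : K := (sys.Ki_nonempty v).choose

lemma base_mem (v : Fin N) : sys.base v ∈ sys.Ki v := (sys.Ki_nonempty v).choose_spec

/-- The distance of a point to the chosen point of its cell. -/
noncomputable def height (x : K) : ℝ := dist x (sys.base (sys.vert x))

lemma height_nonneg (x : K) : 0 ≤ sys.height x := dist_nonneg

lemma vert_base (v : Fin N) : sys.vert (sys.base v) = v := vert_eq (sys.base_mem v)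

variable {sys}

lemma dist_le_height_add_height {x y : K} (h : sys.vert x = sys.vert y) :
    dist x y ≤ sys.height x + sys.height y := by
  have := dist_triangle_right x y (sys.base (sys.vert x))
  rw [height, height, ← h]
  exact this

lemma isBounded_height_le (R : ℝ) : Bornology.IsBounded {x | sys.height x ≤ R} := by
  refine ((Bornology.isBounded_iUnion (s := fun v => Metric.closedBall (sys.base v) R)).2
    fun v => Metric.isBounded_closedBall).subset fun x hx => ?_
  exact Set.mem_iUnion.2 ⟨sys.vert x, hx⟩

/-- `height` is a Lyapunov function of the system. -/
lemma ContractiveOnAvg.exists_height_bound {a δ : ℝ} (hcontr : sys.ContractiveOnAvg a)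
    (hδpos : 0 < δ) (hδ : ∀ e, ∀ x ∈ sys.Ki (sys.edgeI e), δ ≤ sys.p e x) :
    ∃ b > 0, (∀ x, ∑ e, sys.p e x * sys.height (sys.w e x) ≤ a * sys.height x + b) ∧
      ∀ e x, sys.vert x = sys.edgeI e →
        sys.height (sys.w e x) ≤ a / δ * sys.height x + b := by
  set g : E → ℝ := fun e => dist (sys.w e (sys.base (sys.edgeI e))) (sys.base (sys.edgeT e))
  have hg : ∀ e, g e ≤ 1 + ∑ e, g e := fun e => by
    have := Finset.single_le_sum (f := g) (fun e _ => dist_nonneg) (Finset.mem_univ e)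
    linarith
  have hgs : 0 ≤ ∑ e, g e := Finset.sum_nonneg fun e _ => dist_nonneg
  have key : ∀ e x, sys.vert x = sys.edgeI e → sys.height (sys.w e x) ≤
      dist (sys.w e x) (sys.w e (sys.base (sys.vert x))) + (1 + ∑ e, g e) := fun e x he => by
    rw [height, vert_w he, he]
    exact (dist_triangle _ _ _).trans (add_le_add_right (hg e) _)
  refine ⟨1 + ∑ e, g e, by positivity, fun x => ?_, fun e x he => ?_⟩
  · refine (sum_p_mul_le_sum_p_mul fun e he => key e x he).trans ?_
    simp only [mul_add (sys.p _ x) (dist _ _), Finset.sum_add_distrib, sum_p_mul_const]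
    exact add_le_add_left (hcontr.sum_le (sys.vert_base _).symm) _
  · exact (key e x he).trans
      (add_le_add_left (hcontr.dist_w_le hδpos hδ (sys.vert_base _).symm he) _)

end Averages

section Vanishing

variable {sys : MarkovSystem K N E} {a δ ε M : ℝ} {h : K → K → ℝ}

/-- If `h` is subharmonic for the independent product chain and bounded by `M`, a defect `t` of
`h` at a successor of `(x, y)` forces a defect `δ ^ 2 * t` at `(x, y)`. -/
lemma le_sub_of_edges (hδpos : 0 < δ)
    (hδ : ∀ e, ∀ x ∈ sys.Ki (sys.edgeI e), δ ≤ sys.p e x)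
    (hM : ∀ x y, h x y ≤ M)
    (hS : ∀ x y, h x y ≤ ∑ e, sys.p e x * ∑ e', sys.p e' y * h (sys.w e x) (sys.w e' y))
    {x y : K} {e e' : E} (he : sys.vert x = sys.edgeI e) (he' : sys.vert y = sys.edgeI e')
    {t : ℝ} (ht : 0 ≤ t) (hle : h (sys.w e x) (sys.w e' y) ≤ M - t) :
    h x y ≤ M - δ ^ 2 * t := by
  set q : E → ℝ := fun e => ∑ e', sys.p e' y * (M - h (sys.w e x) (sys.w e' y)) with hq
  have hq0 : ∀ e e', 0 ≤ sys.p e' y * (M - h (sys.w e x) (sys.w e' y)) := fun e e' =>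
    mul_nonneg (sys.p_nonneg _ _) (sub_nonneg.2 (hM _ _))
  have hqe : ∀ e, q e = M - ∑ e', sys.p e' y * h (sys.w e x) (sys.w e' y) := fun e => by
    simp only [hq, mul_sub, Finset.sum_sub_distrib, sum_p_mul_const]
  have hsum : ∑ e, sys.p e x * q e
      = M - ∑ e, sys.p e x * ∑ e', sys.p e' y * h (sys.w e x) (sys.w e' y) := by
    simp only [hqe, mul_sub, Finset.sum_sub_distrib, sum_p_mul_const]
  have h1 : δ * t ≤ q e := by
    calc δ * t ≤ sys.p e' y * (M - h (sys.w e x) (sys.w e' y)) :=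
          mul_le_mul (le_p_of_vert_eq hδ he') (by linarith) ht (sys.p_nonneg _ _)
      _ ≤ q e := Finset.single_le_sum (fun e' _ => hq0 e e') (Finset.mem_univ e')
  have h2 : δ * (δ * t) ≤ ∑ e, sys.p e x * q e := by
    calc δ * (δ * t) ≤ sys.p e x * q e :=
          mul_le_mul (le_p_of_vert_eq hδ he) h1 (by positivity) (sys.p_nonneg _ _)
      _ ≤ _ := Finset.single_le_sum (f := fun e => sys.p e x * q e)
          (fun e _ => mul_nonneg (sys.p_nonneg _ _) (Finset.sum_nonneg fun e' _ => hq0 e e'))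
          (Finset.mem_univ e)
  have h3 := hS x y
  rw [hsum] at h2
  linarith

lemma le_sub_of_vert_eq (hcontr : sys.ContractiveOnAvg a) (ha0 : 0 < a) (hδpos : 0 < δ)
    (hδ : ∀ e, ∀ x ∈ sys.Ki (sys.edgeI e), δ ≤ sys.p e x)
    (hS : ∀ x y, h x y ≤ ∑ e, sys.p e x * ∑ e', sys.p e' y * h (sys.w e x) (sys.w e' y))
    {η : ℝ} (hloc : ∀ x y, sys.vert x = sys.vert y → dist x y < η → h x y ≤ ε)
    (hM : ∀ x y, h x y ≤ M) (hεM : ε ≤ M) (m : ℕ) {x y : K} (hxy : sys.vert x = sys.vert y)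
    (hd : a ^ m * dist x y < η) : h x y ≤ M - (δ ^ 2) ^ m * (M - ε) := by
  induction m generalizing x y with
  | zero => simpa using hloc x y hxy (by simpa using hd)
  | succ m ih =>
    obtain ⟨e, he, hle⟩ := hcontr.exists_edge hxy
    have hey := hxy ▸ he
    have := ih (x := sys.w e x) (y := sys.w e y) (by rw [vert_w he, vert_w hey]) (by
      refine lt_of_le_of_lt (mul_le_mul_of_nonneg_left hle (by positivity)) ?_
      rwa [← mul_assoc, ← pow_succ])
    have h2 := le_sub_of_edges hδpos hδ hM hS he hey
      (mul_nonneg (by positivity) (sub_nonneg.2 hεM)) this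
    rwa [← mul_assoc, ← pow_succ'] at h2

lemma exists_le_sub_of_walk (hcontr : sys.ContractiveOnAvg a) (ha0 : 0 < a) (ha1 : a < 1)
    (hδpos : 0 < δ) (hδ : ∀ e, ∀ x ∈ sys.Ki (sys.edgeI e), δ ≤ sys.p e x)
    (hS : ∀ x y, h x y ≤ ∑ e, sys.p e x * ∑ e', sys.p e' y * h (sys.w e x) (sys.w e' y))
    {η : ℝ} (hη : 0 < η)
    (hloc : ∀ x y, sys.vert x = sys.vert y → dist x y < η → h x y ≤ ε)
    (hM : ∀ x y, h x y ≤ M) (hεM : ε ≤ M) (n : ℕ) {u v z : Fin N}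
    (hu : sys.Walk n u z) (hv : sys.Walk n v z) (R : ℝ) :
    ∃ c > 0, ∀ x y, sys.vert x = u → sys.vert y = v → sys.height x ≤ R → sys.height y ≤ R →
      h x y ≤ M - c * (M - ε) := by
  induction n generalizing u v R with
  | zero =>
    obtain rfl : u = z := hu
    obtain rfl : v = u := hv
    obtain ⟨m, hm⟩ := exists_pow_lt_of_lt_one (show 0 < η / (2 * |R| + 1) by positivity) ha1
    refine ⟨(δ ^ 2) ^ m, by positivity, fun x y hx hy hxR hyR => ?_⟩
    have hxy := hx.trans hy.symm
    refine le_sub_of_vert_eq hcontr ha0 hδpos hδ hS hloc hM hεM m hxy ?_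
    have hd : dist x y ≤ 2 * |R| + 1 := by
      linarith [dist_le_height_add_height hxy, le_abs_self R]
    calc a ^ m * dist x y ≤ a ^ m * (2 * |R| + 1) := by gcongr
      _ < η := (lt_div_iff₀ (by positivity)).1 hm
  | succ n ih =>
    obtain ⟨e, rfl, he⟩ := hu
    obtain ⟨e', rfl, he'⟩ := hv
    obtain ⟨b, -, -, hb⟩ := hcontr.exists_height_bound hδpos hδ
    obtain ⟨c, hc, hle⟩ := ih he he' (a / δ * R + b)
    refine ⟨δ ^ 2 * c, by positivity, fun x y hx hy hxR hyR => ?_⟩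
    rw [mul_assoc]
    refine le_sub_of_edges hδpos hδ hM hS hx hy (mul_nonneg hc.le (sub_nonneg.2 hεM)) ?_
    refine hle _ _ (vert_w hx) (vert_w hy) ((hb _ _ hx).trans ?_) ((hb _ _ hy).trans ?_) <;>
    gcongr

lemma exists_le_sub_of_height_le (hcontr : sys.ContractiveOnAvg a) (ha0 : 0 < a) (ha1 : a < 1)
    (hirred : sys.Irreducible) (haper : sys.Aperiodic)
    (hδpos : 0 < δ) (hδ : ∀ e, ∀ x ∈ sys.Ki (sys.edgeI e), δ ≤ sys.p e x)
    (hS : ∀ x y, h x y ≤ ∑ e, sys.p e x * ∑ e', sys.p e' y * h (sys.w e x) (sys.w e' y))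
    {η : ℝ} (hη : 0 < η)
    (hloc : ∀ x y, sys.vert x = sys.vert y → dist x y < η → h x y ≤ ε)
    (hM : ∀ x y, h x y ≤ M) (hεM : ε ≤ M) (R : ℝ) :
    ∃ c > 0, ∀ x y, sys.height x ≤ R → sys.height y ≤ R → h x y ≤ M - c * (M - ε) := by
  choose n z hu hv using hirred.exists_common_walk haper
  choose c hc hle using fun u v => exists_le_sub_of_walk hcontr ha0 ha1 hδpos hδ hS hη hloc hM hεM
    (n u v) (hu u v) (hv u v) R
  obtain ⟨c₀, hc₀, hmin⟩ : ∃ c₀ > 0, ∀ q : Fin N × Fin N, c₀ ≤ c q.1 q.2 := by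
    rcases isEmpty_or_nonempty (Fin N × Fin N) with hN | hN
    · exact ⟨1, one_pos, fun q => isEmptyElim q⟩
    · obtain ⟨q, hq⟩ := Finite.exists_min fun q : Fin N × Fin N => c q.1 q.2
      exact ⟨_, hc q.1 q.2, hq⟩
  refine ⟨c₀, hc₀, fun x y hx hy => (hle _ _ x y rfl rfl hx hy).trans ?_⟩
  have := mul_le_mul_of_nonneg_right (hmin (sys.vert x, sys.vert y)) (sub_nonneg.2 hεM)
  simp only at this
  linarith

/-- A bounded nonnegative function on `K × K` that is subharmonic for the independent product
chain and uniformly small near the diagonal vanishes. -/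
theorem eq_zero_of_subharmonic (hcontr : sys.ContractiveOnAvg a) (ha0 : 0 < a) (ha1 : a < 1)
    (hirred : sys.Irreducible) (haper : sys.Aperiodic)
    (hδpos : 0 < δ) (hδ : ∀ e, ∀ x ∈ sys.Ki (sys.edgeI e), δ ≤ sys.p e x)
    (hS : ∀ x y, h x y ≤ ∑ e, sys.p e x * ∑ e', sys.p e' y * h (sys.w e x) (sys.w e' y))
    (hloc : ∀ ε > 0, ∃ η > 0, ∀ x y, sys.vert x = sys.vert y → dist x y < η → h x y ≤ ε)
    (hnonneg : ∀ x y, 0 ≤ h x y) {B : ℝ} (hB : ∀ x y, h x y ≤ B) (x y : K) : h x y = 0 := by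
  have hbdd : BddAbove (Set.range fun q : K × K => h q.1 q.2) :=
    ⟨B, by rintro _ ⟨q, rfl⟩; exact hB _ _⟩
  set M := ⨆ q : K × K, h q.1 q.2
  have hM : ∀ x y, h x y ≤ M := fun x y => le_ciSup hbdd (x, y)
  refine le_antisymm (le_of_forall_pos_le_add fun ε hε => ?_) (hnonneg x y)
  rw [zero_add]
  refine (hM x y).trans ?_
  by_contra! hεM
  obtain ⟨η, hη, hη'⟩ := hloc ε hε
  obtain ⟨b, hb0, hb, -⟩ := hcontr.exists_height_bound hδpos hδ
  have ha1' : 0 < 1 - a := sub_pos.2 ha1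
  set R := 4 * b / (1 - a) with hR
  have hR0 : 0 < R := by positivity
  obtain ⟨c, hc, hle⟩ := exists_le_sub_of_height_le hcontr ha0 ha1 hirred haper hδpos hδ hS hη hη'
    hM hεM.le R
  set γ := c * (M - ε)
  have hγ0 : 0 < γ := mul_pos hc (sub_pos.2 hεM)
  have hbase : ∀ x y, h x y ≤ (M - γ) + γ / R * (sys.height x + sys.height y) := fun x y => by
    have hx := sys.height_nonneg x
    have hy := sys.height_nonneg y
    by_cases hxy : sys.height x ≤ R ∧ sys.height y ≤ R
    · have := hle x y hxy.1 hxy.2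
      have : 0 ≤ γ / R * (sys.height x + sys.height y) := by positivity
      linarith
    · have h1 : R ≤ sys.height x + sys.height y := by
        by_contra! hlt
        exact hxy ⟨by linarith, by linarith⟩
      have h2 : γ ≤ γ / R * (sys.height x + sys.height y) := by
        calc γ = γ / R * R := by field_simp
          _ ≤ _ := by gcongr
      linarith [hM x y]
  have hstep : ∀ A C : ℝ, 0 ≤ C → (∀ x y, h x y ≤ A + C * (sys.height x + sys.height y)) →
      ∀ x y, h x y ≤ A + C * (a * (sys.height x + sys.height y) + 2 * b) := by
    intro A C hC hAC x y
    calc h x y ≤ _ := hS x y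
      _ ≤ ∑ e, sys.p e x * ∑ e', sys.p e' y *
            ((A + C * sys.height (sys.w e x)) + C * sys.height (sys.w e' y)) := by
          refine sum_p_mul_le_sum_p_mul fun e _ => sum_p_mul_le_sum_p_mul fun e' _ => ?_
          linarith [hAC (sys.w e x) (sys.w e' y)]
      _ = A + C * (∑ e, sys.p e x * sys.height (sys.w e x)
            + ∑ e', sys.p e' y * sys.height (sys.w e' y)) := by
          simp only [mul_add, Finset.sum_add_distrib, sum_p_mul_const, mul_left_comm _ C,
            ← Finset.mul_sum]
          ring
      _ ≤ _ := by
          have h1 := mul_le_mul_of_nonneg_left (hb x) hC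
          have h2 := mul_le_mul_of_nonneg_left (hb y) hC
          linarith
  have hiter : ∀ (k : ℕ) (x y : K), h x y ≤
      (M - γ + γ / R * (2 * b / (1 - a))) +
        (γ / R * a ^ k) * (sys.height x + sys.height y) := by
    have aux : ∀ (k : ℕ) (x y : K), h x y ≤
        (M - γ + γ / R * (2 * b * (1 - a ^ k) / (1 - a))) +
          (γ / R * a ^ k) * (sys.height x + sys.height y) := by
      intro k
      induction k with
      | zero => intro x y; simpa using hbase x y
      | succ k ih =>
        intro x y
        refine (hstep _ _ (by positivity) ih x y).trans (le_of_eq ?_)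
        field_simp
        ring
    intro k x y
    refine (aux k x y).trans ?_
    have h1 : 0 ≤ 2 * b * a ^ k := by positivity
    have h2 : 2 * b * (1 - a ^ k) / (1 - a) ≤ 2 * b / (1 - a) :=
      div_le_div_of_nonneg_right (by linarith) ha1'.le
    have h3 := mul_le_mul_of_nonneg_left h2 (show 0 ≤ γ / R by positivity)
    linarith
  have hlim : ∀ x y, h x y ≤ M - γ / 2 := fun x y => by
    have ht : Tendsto (fun k : ℕ => (M - γ + γ / R * (2 * b / (1 - a))) +
        (γ / R * a ^ k) * (sys.height x + sys.height y)) atTop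
        (nhds ((M - γ + γ / R * (2 * b / (1 - a))) +
          (γ / R * 0) * (sys.height x + sys.height y))) :=
      (((tendsto_pow_atTop_nhds_zero_of_lt_one ha0.le ha1).const_mul _).mul_const _).const_add _
    refine (ge_of_tendsto' ht fun k => hiter k x y).trans (le_of_eq ?_)
    rw [hR]
    field_simp
    ring
  have : Nonempty (K × K) := ⟨(x, y)⟩
  have : M ≤ M - γ / 2 := ciSup_le fun q => hlim q.1 q.2
  linarith

end Vanishing

end MarkovSystem

section Modulus

variable {X : Type*} [PseudoMetricSpace X] {h : X → ℝ}

lemma modulus_mono : Monotone (modulus h) := fun _ _ hst =>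
  iSup_mono fun _ => iSup_mono fun _ => iSup_mono' fun hd => ⟨hd.trans hst, le_rfl⟩

lemma modulus_le_ofReal {C : ℝ} (hC : ∀ x y, |h x - h y| ≤ C) (t : ℝ) :
    modulus h t ≤ ENNReal.ofReal C :=
  iSup_le fun x => iSup_le fun y => iSup_le fun _ => ENNReal.ofReal_le_ofReal (hC x y)

lemma abs_sub_le_toReal_modulus {C : ℝ} (hC : ∀ x y, |h x - h y| ≤ C) {x y : X} {t : ℝ}
    (hxy : dist x y ≤ t) : |h x - h y| ≤ (modulus h t).toReal := by
  have h1 : ENNReal.ofReal |h x - h y| ≤ modulus h t :=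
    le_iSup_of_le x (le_iSup_of_le y (le_iSup_of_le hxy le_rfl))
  exact (ENNReal.ofReal_le_iff_le_toReal
    (ne_top_of_le_ne_top ENNReal.ofReal_ne_top (modulus_le_ofReal hC t))).1 h1

/-- The modulus of continuity of a Dini-continuous function is summable along geometric scales. -/
lemma DiniContinuous.summable_modulus (hd : DiniContinuous h) {C : ℝ}
    (hC : ∀ x y, |h x - h y| ≤ C) {r : ℝ} (hr0 : 0 < r) (hr1 : r < 1) :
    Summable fun k : ℕ => (modulus h (r ^ k)).toReal := by
  obtain ⟨c, hc, hint⟩ := hd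
  have hfin : ∀ t, modulus h t ≠ ⊤ := fun t =>
    ne_top_of_le_ne_top ENNReal.ofReal_ne_top (modulus_le_ofReal hC t)
  have hanti : Antitone fun k : ℕ => c * r ^ k := fun m n hmn =>
    mul_le_mul_of_nonneg_left (pow_le_pow_of_le_one hr0.le hr1.le hmn) hc.le
  have hpiece : ∀ k : ℕ, modulus h (c * r ^ (k + 1)) * ENNReal.ofReal (1 - r) ≤
      ∫⁻ t in Set.Ioc (c * r ^ (k + 1)) (c * r ^ k), modulus h t / ENNReal.ofReal t := by
    intro k
    have hpos : 0 < c * r ^ k := by positivity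
    calc modulus h (c * r ^ (k + 1)) * ENNReal.ofReal (1 - r)
        = ∫⁻ _ in Set.Ioc (c * r ^ (k + 1)) (c * r ^ k),
            modulus h (c * r ^ (k + 1)) / ENNReal.ofReal (c * r ^ k) := by
          rw [setLIntegral_const, Real.volume_Ioc,
            show c * r ^ k - c * r ^ (k + 1) = c * r ^ k * (1 - r) by ring,
            ENNReal.ofReal_mul hpos.le, ← mul_assoc, ENNReal.div_mul_cancel]
          · simpa using hpos
          · exact ENNReal.ofReal_ne_top
      _ ≤ _ := setLIntegral_mono' measurableSet_Ioc fun t ht =>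
          ENNReal.div_le_div (modulus_mono ht.1.le) (ENNReal.ofReal_le_ofReal ht.2)
  have htsum : ∑' k : ℕ, modulus h (c * r ^ (k + 1)) ≠ ⊤ := by
    intro htop
    have h1 : (∑' k : ℕ, modulus h (c * r ^ (k + 1))) * ENNReal.ofReal (1 - r) < ⊤ := by
      rw [← ENNReal.tsum_mul_right]
      refine lt_of_le_of_lt (ENNReal.tsum_le_tsum hpiece) ?_
      rw [← lintegral_iUnion (fun _ => measurableSet_Ioc)
        (by simpa using hanti.pairwise_disjoint_on_Ioc_succ)]
      refine lt_of_le_of_lt (lintegral_mono_set (Set.iUnion_subset fun k => ?_)) hint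
      refine Set.Ioc_subset_Ioc (by positivity) ?_
      simpa using hanti (Nat.zero_le k)
    rw [htop, ENNReal.top_mul (by simpa using hr1)] at h1
    exact lt_irrefl _ h1
  obtain ⟨j, hj⟩ := exists_pow_lt_of_lt_one (show 0 < c * r by positivity) hr1
  refine (summable_nat_add_iff j).1 (Summable.of_nonneg_of_le (fun _ => ENNReal.toReal_nonneg)
    (fun k => ENNReal.toReal_mono (hfin _) (modulus_mono ?_)) (ENNReal.summable_toReal htsum))
  calc r ^ (k + j) = r ^ k * r ^ j := pow_add _ _ _
    _ ≤ r ^ k * (c * r) := by gcongr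
    _ = c * r ^ (k + 1) := by ring

end Modulus

namespace MarkovSystem

variable {K : Type*} [MetricSpace K] [MeasurableSpace K] {N : ℕ} {E : Type*} [Fintype E]
  {sys : MarkovSystem K N E} {a δ : ℝ}

section Equicontinuity

lemma exists_modulus_p
    (hdini : ∀ e, DiniContinuous fun x : sys.Ki (sys.edgeI e) => sys.p e (x : K))
    {r : ℝ} (hr0 : 0 < r) (hr1 : r < 1) :
    ∃ ω : ℝ → ℝ, (Summable fun k : ℕ => ω (r ^ k)) ∧ (∀ t, 0 ≤ ω t) ∧
      ∀ t x y, sys.vert x = sys.vert y → dist x y ≤ t →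
        ∑ e, |sys.p e x - sys.p e y| ≤ ω t := by
  have hC : ∀ e (x y : sys.Ki (sys.edgeI e)), |sys.p e (x : K) - sys.p e (y : K)| ≤ 1 :=
    fun e x y => abs_sub_le_of_nonneg_of_le (sys.p_nonneg _ _) (p_le_one _ _)
      (sys.p_nonneg _ _) (p_le_one _ _)
  refine ⟨fun t => ∑ e, (modulus (fun x : sys.Ki (sys.edgeI e) => sys.p e (x : K)) t).toReal,
    summable_sum fun e _ => (hdini e).summable_modulus (hC e) hr0 hr1,
    fun t => Finset.sum_nonneg fun e _ => ENNReal.toReal_nonneg, fun t x y hxy hd => ?_⟩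
  refine Finset.sum_le_sum fun e _ => ?_
  by_cases he : sys.vert x = sys.edgeI e
  · exact abs_sub_le_toReal_modulus (hC e) (x := ⟨x, he ▸ sys.mem_Ki_vert x⟩)
      (y := ⟨y, he ▸ hxy ▸ sys.mem_Ki_vert y⟩) hd
  · rw [p_eq_zero_of_vert_ne he, p_eq_zero_of_vert_ne (hxy ▸ he)]
    simp

lemma abs_Uop_le {f : K → ℝ} {B : ℝ} (hB : ∀ x, |f x| ≤ B) (x : K) : |Uop sys f x| ≤ B := by
  calc |Uop sys f x| ≤ ∑ e, |sys.p e x * f (sys.w e x)| := Finset.abs_sum_le_sum_abs _ _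
    _ = ∑ e, sys.p e x * |f (sys.w e x)| := by
        simp only [abs_mul, abs_of_nonneg (sys.p_nonneg _ _)]
    _ ≤ ∑ e, sys.p e x * B := sum_p_mul_le_sum_p_mul fun e _ => hB _
    _ = B := sum_p_mul_const x B

lemma abs_iterate_Uop_le {f : K → ℝ} {B : ℝ} (hB : ∀ x, |f x| ≤ B) (n : ℕ) (x : K) :
    |(Uop sys)^[n] f x| ≤ B := by
  induction n generalizing x with
  | zero => exact hB x
  | succ n ih => rw [Function.iterate_succ_apply']; exact abs_Uop_le ih x

lemma abs_Uop_sub_Uop_le {f : K → ℝ} {B : ℝ} (hB : ∀ x, |f x| ≤ B) (x y : K) :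
    |Uop sys f x - Uop sys f y| ≤
      ∑ e, sys.p e x * |f (sys.w e x) - f (sys.w e y)| + B * ∑ e, |sys.p e x - sys.p e y| := by
  have hsplit : Uop sys f x - Uop sys f y = ∑ e, (sys.p e x * (f (sys.w e x) - f (sys.w e y))
      + (sys.p e x - sys.p e y) * f (sys.w e y)) := by
    rw [Uop, Uop, ← Finset.sum_sub_distrib]
    exact Finset.sum_congr rfl fun e _ => by ring
  rw [hsplit, Finset.mul_sum, ← Finset.sum_add_distrib]
  refine (Finset.abs_sum_le_sum_abs _ _).trans (Finset.sum_le_sum fun e _ => ?_)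
  refine (abs_add_le _ _).trans (add_le_add (le_of_eq ?_) ?_)
  · rw [abs_mul, abs_of_nonneg (sys.p_nonneg _ _)]
  · rw [abs_mul, mul_comm]
    exact mul_le_mul_of_nonneg_right (hB _) (abs_nonneg _)

lemma sum_abs_p_sub_le (x y : K) : ∑ e, |sys.p e x - sys.p e y| ≤ 2 := by
  calc ∑ e, |sys.p e x - sys.p e y| ≤ ∑ e, (sys.p e x + sys.p e y) :=
        Finset.sum_le_sum fun e _ => (abs_sub _ _).trans (by
          rw [abs_of_nonneg (sys.p_nonneg _ _), abs_of_nonneg (sys.p_nonneg _ _)])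
    _ = 2 := by rw [Finset.sum_add_distrib, sys.p_sum_one, sys.p_sum_one]; norm_num

lemma abs_iterate_Uop_sub_le (hcontr : sys.ContractiveOnAvg a) (ha0 : 0 < a)
    {ω : ℝ → ℝ} (hω0 : ∀ t, 0 ≤ ω t)
    (hω : ∀ t x y, sys.vert x = sys.vert y → dist x y ≤ t →
      ∑ e, |sys.p e x - sys.p e y| ≤ ω t)
    {b : ℝ} (hb : ∀ x, ∑ e, sys.p e x * sys.height (sys.w e x) ≤ a * sys.height x + b)
    {f : K → ℝ} {A B α β : ℝ} (hB0 : 0 ≤ B) (hα : 0 ≤ α) (hβ : 0 ≤ β) (hB : ∀ x, |f x| ≤ B)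
    (hf : ∀ x y, |f x - f y| ≤ A + α * sys.height x + β * dist x y)
    (n : ℕ) (s : ℕ → ℝ) (hs : ∀ k, 0 < s k) {x y : K} (hxy : sys.vert x = sys.vert y) :
    |(Uop sys)^[n] f x - (Uop sys)^[n] f y| ≤
      (A + α * b * ∑ k ∈ Finset.range n, a ^ k + B * ∑ k ∈ Finset.range n, ω (s k))
        + α * a ^ n * sys.height x
        + (β * a ^ n + 2 * B * ∑ k ∈ Finset.range n, a ^ k / s k) * dist x y := by
  induction n generalizing s x y with
  | zero => simpa using hf x y
  | succ n ih =>
    rw [Function.iterate_succ_apply']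
    refine (abs_Uop_sub_Uop_le (abs_iterate_Uop_le hB n) x y).trans ?_
    set Q := A + α * b * ∑ k ∈ Finset.range n, a ^ k + B * ∑ k ∈ Finset.range n, ω (s (k + 1))
      with hQ
    set P := β * a ^ n + 2 * B * ∑ k ∈ Finset.range n, a ^ k / s (k + 1) with hP
    have hP0 : 0 ≤ P := by
      have : 0 ≤ ∑ k ∈ Finset.range n, a ^ k / s (k + 1) :=
        Finset.sum_nonneg fun k _ => div_nonneg (by positivity) (hs _).le
      positivity
    have h1 : ∑ e, sys.p e x * |(Uop sys)^[n] f (sys.w e x) - (Uop sys)^[n] f (sys.w e y)| ≤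
        Q + α * a ^ n * (a * sys.height x + b) + P * (a * dist x y) := by
      calc _ ≤ ∑ e, sys.p e x * (Q + α * a ^ n * sys.height (sys.w e x)
              + P * dist (sys.w e x) (sys.w e y)) :=
            sum_p_mul_le_sum_p_mul fun e he => ih (fun k => s (k + 1)) (fun k => hs _)
              (by rw [vert_w he, vert_w (hxy ▸ he)])
        _ = Q + α * a ^ n * ∑ e, sys.p e x * sys.height (sys.w e x)
              + P * ∑ e, sys.p e x * dist (sys.w e x) (sys.w e y) := by
            simp only [mul_add (sys.p _ x), Finset.sum_add_distrib, sum_p_mul_const,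
              mul_left_comm (sys.p _ x), Finset.mul_sum]
        _ ≤ _ := by
            have := hb x
            have := hcontr.sum_le hxy
            gcongr
    have h2 : ∑ e, |sys.p e x - sys.p e y| ≤ ω (s 0) + 2 / s 0 * dist x y := by
      have hs0 := hs 0
      rcases le_or_gt (dist x y) (s 0) with hd | hd
      · have : 0 ≤ 2 / s 0 * dist x y := by positivity
        linarith [hω _ x y hxy hd]
      · have : 2 ≤ 2 / s 0 * dist x y := by
          rw [div_mul_eq_mul_div, le_div_iff₀ hs0]
          linarith
        linarith [sum_abs_p_sub_le (sys := sys) x y, hω0 (s 0)]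
    have h3 := mul_le_mul_of_nonneg_left h2 hB0
    have h4 : ∑ k ∈ Finset.range (n + 1), a ^ k / s k =
        a * ∑ k ∈ Finset.range n, a ^ k / s (k + 1) + 1 / s 0 := by
      rw [Finset.sum_range_succ', Finset.mul_sum, pow_zero]
      congr 1
      exact Finset.sum_congr rfl fun k _ => by ring
    rw [h4, Finset.sum_range_succ (fun k => a ^ k), Finset.sum_range_succ' (fun k => ω (s k))]
    refine (add_le_add h1 h3).trans (le_of_eq ?_)
    rw [hQ, hP]
    ring

lemma exists_oscillation_bound
    (hrelcpt : ∀ s : Set K, Bornology.IsBounded s → IsCompact (closure s))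
    {f : K → ℝ} (hf : Continuous f) {B : ℝ} (hB : ∀ x, |f x| ≤ B) {A α : ℝ} (hA : 0 < A)
    (hα : 0 < α) :
    ∃ β ≥ 0, ∀ x y, |f x - f y| ≤ A + α * sys.height x + β * dist x y := by
  have hcpt := hrelcpt _ (isBounded_height_le (sys := sys) (2 * B / α))
  obtain ⟨ζ, hζ, hζ'⟩ := Metric.mem_uniformity_dist.1
    (hcpt.uniformContinuousAt_of_continuousAt f (fun x _ => hf.continuousAt)
      (Metric.dist_mem_uniformity hA))
  refine ⟨2 * |B| / ζ, by positivity, fun x y => ?_⟩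
  have hx := sys.height_nonneg x
  have h2B : |f x - f y| ≤ 2 * B := by
    linarith [abs_sub (f x) (f y), hB x, hB y]
  have h1 : 0 ≤ α * sys.height x := by positivity
  have h2 : 0 ≤ 2 * |B| / ζ * dist x y := by positivity
  by_cases hR : sys.height x ≤ 2 * B / α
  · rcases lt_or_ge (dist x y) ζ with hd | hd
    · have := hζ' hd (subset_closure hR)
      rw [Set.mem_ofPred_eq, Real.dist_eq] at this
      linarith
    · have : 2 * |B| ≤ 2 * |B| / ζ * dist x y := by
        rw [div_mul_eq_mul_div, le_div_iff₀ hζ]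
        gcongr
      linarith [le_abs_self B]
  · have := (div_lt_iff₀ hα).1 (not_le.1 hR)
    linarith

/-- The iterates `Uⁿ f` are asymptotically equicontinuous inside the cells. -/
lemma exists_asymptotic_equicontinuity (hcontr : sys.ContractiveOnAvg a) (ha0 : 0 < a)
    (ha1 : a < 1)
    (hrelcpt : ∀ s : Set K, Bornology.IsBounded s → IsCompact (closure s))
    (hdini : ∀ e, DiniContinuous fun x : sys.Ki (sys.edgeI e) => sys.p e (x : K))
    (hδpos : 0 < δ) (hδ : ∀ e, ∀ x ∈ sys.Ki (sys.edgeI e), δ ≤ sys.p e x)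
    {f : K → ℝ} (hf : Continuous f) {B : ℝ} (hB0 : 0 ≤ B) (hB : ∀ x, |f x| ≤ B)
    {ε : ℝ} (hε : 0 < ε) :
    ∃ η > 0, ∀ x, ∃ n₀, ∀ n ≥ n₀, ∀ y, sys.vert x = sys.vert y → dist x y < η →
      |(Uop sys)^[n] f x - (Uop sys)^[n] f y| ≤ ε := by
  have hr0 : 0 < √a := Real.sqrt_pos.2 ha0
  have hr1 : √a < 1 := (Real.sqrt_lt' one_pos).2 (by simpa using ha1)
  set r := √a
  have hra : r * r = a := Real.mul_self_sqrt ha0.le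
  obtain ⟨ω, hωs, hω0, hω⟩ := exists_modulus_p hdini hr0 hr1
  obtain ⟨b, hb0, hb, -⟩ := hcontr.exists_height_bound hδpos hδ
  have ha1' : 0 < 1 - a := sub_pos.2 ha1
  have hr1' : 0 < 1 - r := sub_pos.2 hr1
  set κ := ε / 5 with hκ
  have hκ0 : 0 < κ := by positivity
  obtain ⟨j, hj⟩ : ∃ j : ℕ, B * ∑' k, ω (r ^ (k + j)) < κ := by
    have := (tendsto_sum_nat_add fun k => ω (r ^ k)).const_mul B
    rw [mul_zero] at this
    exact (this.eventually_lt_const hκ0).exists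
  set α := κ * (1 - a) / b with hαdef
  have hα : 0 < α := by positivity
  obtain ⟨β, hβ, hfβ⟩ := exists_oscillation_bound (sys := sys) hrelcpt hf hB hκ0 hα
  set P := 2 * B * (1 / (r ^ j * (1 - r))) with hP
  have hP0 : 0 ≤ P := by positivity
  refine ⟨κ / (P + 1), by positivity, fun x => ?_⟩
  set η := κ / (P + 1) with hη
  have hη0 : 0 < η := by positivity
  have hPη : P * η ≤ κ := by
    rw [hη, mul_div_assoc', div_le_iff₀ (by positivity)]
    linarith
  obtain ⟨n₀, hn₀⟩ : ∃ n₀ : ℕ, ∀ n ≥ n₀, a ^ n * (α * sys.height x + β * η) < κ := by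
    have := (tendsto_pow_atTop_nhds_zero_of_lt_one ha0.le ha1).mul_const
      (α * sys.height x + β * η)
    rw [zero_mul] at this
    exact eventually_atTop.1 (this.eventually_lt_const hκ0)
  refine ⟨n₀, fun n hn y hxy hd => ?_⟩
  refine (abs_iterate_Uop_sub_le hcontr ha0 hω0 hω hb hB0 hα.le hβ hB hfβ n
    (fun k => r ^ (k + j)) (fun k => by positivity) hxy).trans ?_
  have h1 : α * b * ∑ k ∈ Finset.range n, a ^ k ≤ κ := by
    have : ∑ k ∈ Finset.range n, a ^ k ≤ (1 - a)⁻¹ := by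
      rw [← tsum_geometric_of_lt_one ha0.le ha1]
      exact (summable_geometric_of_lt_one ha0.le ha1).sum_le_tsum _ fun k _ => by positivity
    calc _ ≤ α * b * (1 - a)⁻¹ := by gcongr
      _ = κ := by rw [hαdef]; field_simp
  have h2 : B * ∑ k ∈ Finset.range n, ω (r ^ (k + j)) ≤ κ := by
    refine le_trans (mul_le_mul_of_nonneg_left ?_ hB0) hj.le
    exact ((summable_nat_add_iff j).2 hωs).sum_le_tsum _ fun k _ => hω0 _
  have h3 : 2 * B * ∑ k ∈ Finset.range n, a ^ k / r ^ (k + j) ≤ P := by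
    refine mul_le_mul_of_nonneg_left ?_ (by positivity)
    have hk : ∀ k, a ^ k / r ^ (k + j) = r ^ k * (r ^ j)⁻¹ := fun k => by
      rw [← hra, mul_pow, pow_add]
      field_simp
    simp only [hk, ← Finset.sum_mul]
    have : ∑ k ∈ Finset.range n, r ^ k ≤ (1 - r)⁻¹ := by
      rw [← tsum_geometric_of_lt_one hr0.le hr1]
      exact (summable_geometric_of_lt_one hr0.le hr1).sum_le_tsum _ fun k _ => by positivity
    calc _ ≤ (1 - r)⁻¹ * (r ^ j)⁻¹ := by gcongr
      _ = _ := by field_simp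
  have h4 : (β * a ^ n + 2 * B * ∑ k ∈ Finset.range n, a ^ k / r ^ (k + j)) * dist x y ≤
      (β * a ^ n + P) * η := by
    gcongr
  linarith [hn₀ n hn]

end Equicontinuity

section Convergence

lemma Uop_sub_Uop_eq (f : K → ℝ) (x y : K) : Uop sys f x - Uop sys f y =
    ∑ e, sys.p e x * ∑ e', sys.p e' y * (f (sys.w e x) - f (sys.w e' y)) := by
  simp only [mul_sub, Finset.sum_sub_distrib, sum_p_mul_const, Uop]

lemma tendsto_iterate_Uop_sub (hcontr : sys.ContractiveOnAvg a) (ha0 : 0 < a)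
    (ha1 : a < 1) (hirred : sys.Irreducible) (haper : sys.Aperiodic)
    (hrelcpt : ∀ s : Set K, Bornology.IsBounded s → IsCompact (closure s))
    (hdini : ∀ e, DiniContinuous fun x : sys.Ki (sys.edgeI e) => sys.p e (x : K))
    (hδpos : 0 < δ) (hδ : ∀ e, ∀ x ∈ sys.Ki (sys.edgeI e), δ ≤ sys.p e x)
    {f : K → ℝ} (hf : Continuous f) {B : ℝ} (hB0 : 0 ≤ B) (hB : ∀ x, |f x| ≤ B) (x y : K) :
    Tendsto (fun n : ℕ => (Uop sys)^[n] f x - (Uop sys)^[n] f y) atTop (nhds 0) := by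
  set D : K → K → ℕ → ℝ := fun x y n => |(Uop sys)^[n] f x - (Uop sys)^[n] f y| with hD
  have hD2B : ∀ x y n, D x y n ≤ 2 * B := fun x y n => by
    have h1 := abs_sub ((Uop sys)^[n] f x) ((Uop sys)^[n] f y)
    have h2 := abs_iterate_Uop_le (sys := sys) hB n x
    have h3 := abs_iterate_Uop_le (sys := sys) hB n y
    simp only [hD]
    linarith
  have hD0 : ∀ x y n, 0 ≤ D x y n := fun x y n => abs_nonneg _
  have hbdd : ∀ x y, IsBoundedUnder (· ≤ ·) atTop (D x y) := fun x y =>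
    isBoundedUnder_of ⟨2 * B, hD2B x y⟩
  have hcobdd : ∀ x y, IsCoboundedUnder (· ≤ ·) atTop (D x y) := fun x y =>
    (isBoundedUnder_of ⟨0, hD0 x y⟩ : IsBoundedUnder (· ≥ ·) atTop (D x y)).isCoboundedUnder_le
  set h : K → K → ℝ := fun x y => limsup (D x y) atTop
  have hzero : h x y = 0 := by
    refine eq_zero_of_subharmonic hcontr ha0 ha1 hirred haper hδpos hδ (fun x y => ?_)
      (fun ε hε => ?_) (fun x y => ?_) (B := 2 * B) (fun x y => ?_) x y
    · refine le_of_forall_pos_le_add fun ε hε => ?_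
      have hev : ∀ᶠ n in atTop, ∀ e e', D (sys.w e x) (sys.w e' y) n
          ≤ h (sys.w e x) (sys.w e' y) + ε :=
        eventually_all.2 fun e => eventually_all.2 fun e' =>
          (eventually_lt_of_limsup_lt (lt_add_of_pos_right _ hε) (hbdd _ _)).mono
            fun _ hn => hn.le
      have hle : limsup (fun n => D x y (n + 1)) atTop ≤
          ∑ e, sys.p e x * ∑ e', sys.p e' y * h (sys.w e x) (sys.w e' y) + ε := by
        refine limsup_le_of_le (isBoundedUnder_of
          ⟨0, fun n => hD0 x y (n + 1)⟩ : IsBoundedUnder (· ≥ ·) atTop _).isCoboundedUnder_le ?_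
        filter_upwards [hev] with n hn
        simp only [hD, Function.iterate_succ_apply', Uop_sub_Uop_eq]
        calc _ ≤ ∑ e, sys.p e x * ∑ e', sys.p e' y * D (sys.w e x) (sys.w e' y) n := by
              refine (Finset.abs_sum_le_sum_abs _ _).trans (Finset.sum_le_sum fun e _ => ?_)
              rw [abs_mul, abs_of_nonneg (sys.p_nonneg _ _)]
              refine mul_le_mul_of_nonneg_left ?_ (sys.p_nonneg _ _)
              refine (Finset.abs_sum_le_sum_abs _ _).trans (Finset.sum_le_sum fun e' _ => ?_)
              rw [abs_mul, abs_of_nonneg (sys.p_nonneg _ _)]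
          _ ≤ ∑ e, sys.p e x * ∑ e', sys.p e' y * (h (sys.w e x) (sys.w e' y) + ε) :=
              sum_p_mul_le_sum_p_mul fun e _ => sum_p_mul_le_sum_p_mul fun e' _ => hn e e'
          _ = _ := by simp only [mul_add, Finset.sum_add_distrib, sum_p_mul_const]
      rwa [limsup_nat_add] at hle
    · obtain ⟨η, hη, hloc⟩ := exists_asymptotic_equicontinuity hcontr ha0 ha1 hrelcpt hdini
        hδpos hδ hf hB0 hB hε
      refine ⟨η, hη, fun x y hxy hd => limsup_le_of_le (hcobdd x y) ?_⟩
      obtain ⟨n₀, hn₀⟩ := hloc x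
      filter_upwards [eventually_ge_atTop n₀] with n hn
      exact hn₀ n hn y hxy hd
    · exact le_limsup_of_frequently_le (Frequently.of_forall (hD0 x y)) (hbdd x y)
    · exact limsup_le_of_le (hcobdd x y) (Eventually.of_forall (hD2B x y))
  refine (tendsto_zero_iff_abs_tendsto_zero _).2 ?_
  refine tendsto_of_le_liminf_of_limsup_le ?_ hzero.le (hbdd x y)
    (isBoundedUnder_of ⟨0, hD0 x y⟩)
  exact le_liminf_of_le (hbdd x y).isCoboundedUnder_ge (Eventually.of_forall (hD0 x y))

lemma measurable_Uop {f : K → ℝ} (hf : Measurable f) : Measurable (Uop sys f) :=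
  Finset.measurable_sum _ fun e _ => (sys.p_measurable e).mul (hf.comp (sys.w_measurable e))

lemma measurable_iterate_Uop {f : K → ℝ} (hf : Measurable f) (n : ℕ) :
    Measurable ((Uop sys)^[n] f) := by
  induction n with
  | zero => exact hf
  | succ n ih => rw [Function.iterate_succ_apply']; exact measurable_Uop ih

lemma IsInvariant.integral_iterate_Uop {μ : Measure K} (hμ : sys.IsInvariant μ) {f : K → ℝ}
    (hf : Measurable f) {B : ℝ} (hB : ∀ x, |f x| ≤ B) (n : ℕ) :
    ∫ x, (Uop sys)^[n] f x ∂μ = ∫ x, f x ∂μ := by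
  induction n with
  | zero => rfl
  | succ n ih =>
    rw [← ih, Function.iterate_succ_apply']
    exact hμ.2 _ (measurable_iterate_Uop hf n) ⟨B, abs_iterate_Uop_le hB n⟩

lemma isFiniteMeasure_withDensity_p (ν : Measure K) [IsFiniteMeasure ν] (e : E) :
    IsFiniteMeasure (ν.withDensity fun x => ENNReal.ofReal (sys.p e x)) := by
  refine isFiniteMeasure_withDensity (ne_top_of_le_ne_top (measure_ne_top ν Set.univ) ?_)
  calc ∫⁻ x, ENNReal.ofReal (sys.p e x) ∂ν ≤ ∫⁻ _, 1 ∂ν :=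
        lintegral_mono fun x => ENNReal.ofReal_le_one.2 (p_le_one e x)
    _ = ν Set.univ := by simp

lemma isFiniteMeasure_Ustar (ν : Measure K) [IsFiniteMeasure ν] :
    IsFiniteMeasure (Ustar sys ν) := by
  have := fun e => isFiniteMeasure_withDensity_p (sys := sys) ν e
  refine ⟨?_⟩
  rw [Ustar, Measure.finsetSum_apply]
  exact ENNReal.sum_lt_top.2 fun e _ => measure_lt_top _ _

lemma integral_Ustar (ν : Measure K) [IsFiniteMeasure ν] {f : K → ℝ}
    (hf : Measurable f) {B : ℝ} (hB : ∀ x, |f x| ≤ B) :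
    ∫ x, f x ∂(Ustar sys ν) = ∫ x, Uop sys f x ∂ν := by
  have hfin := fun e => isFiniteMeasure_withDensity_p (sys := sys) ν e
  have hpf : ∀ e, Integrable (fun x => sys.p e x * f (sys.w e x)) ν := fun e => by
    refine Integrable.of_bound ((sys.p_measurable e).mul
      (hf.comp (sys.w_measurable e))).aestronglyMeasurable B (Eventually.of_forall fun x => ?_)
    rw [Real.norm_eq_abs, abs_mul, abs_of_nonneg (sys.p_nonneg e x)]
    calc sys.p e x * |f (sys.w e x)| ≤ 1 * B :=
          mul_le_mul (p_le_one e x) (hB _) (abs_nonneg _) zero_le_one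
      _ = B := one_mul B
  rw [Ustar, integral_finsetSum_measure fun e _ =>
    Integrable.of_bound hf.aestronglyMeasurable B (Eventually.of_forall hB)]
  simp only [Uop]
  rw [integral_finsetSum _ fun e _ => hpf e]
  refine Finset.sum_congr rfl fun e _ => ?_
  rw [integral_map (sys.w_measurable e).aemeasurable hf.aestronglyMeasurable,
    integral_withDensity_eq_integral_toReal_smul (sys.p_measurable e).ennreal_ofReal
      (Eventually.of_forall fun x => ENNReal.ofReal_lt_top)]
  simp only [ENNReal.toReal_ofReal (sys.p_nonneg _ _), smul_eq_mul]

lemma integral_iterate_Ustar (ν : Measure K) [IsFiniteMeasure ν] {f : K → ℝ}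
    (hf : Measurable f) {B : ℝ} (hB : ∀ x, |f x| ≤ B) (n : ℕ) :
    ∫ x, f x ∂((Ustar sys)^[n] ν) = ∫ x, (Uop sys)^[n] f x ∂ν := by
  induction n generalizing ν with
  | zero => rfl
  | succ n ih =>
    have := isFiniteMeasure_Ustar (sys := sys) ν
    rw [Function.iterate_succ_apply, Function.iterate_succ_apply', ih,
      integral_Ustar ν (measurable_iterate_Uop hf n) (abs_iterate_Uop_le hB n)]

end Convergence

end MarkovSystem

/-- For an irreducible and aperiodic contractive Markov system (with the standing
assumptions) and its unique invariant measure `μ`: `Uⁿf(x) → ∫ f dμ` for every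
bounded continuous `f` and every `x`, uniformly on bounded subsets; in particular
`μ` is attractive. -/
theorem attractiveness_of_aperiodic_CMS
    {K : Type*} [MetricSpace K] [CompleteSpace K] [MeasurableSpace K] [BorelSpace K]
    {N : ℕ} {E : Type*} [Fintype E]
    (sys : MarkovSystem K N E) (a : ℝ) (ha0 : 0 < a) (ha1 : a < 1)
    (hcontr : sys.ContractiveOnAvg a)
    (hirred : sys.Irreducible) (haper : sys.Aperiodic)
    (hrelcpt : ∀ s : Set K, Bornology.IsBounded s → IsCompact (closure s))
    (hopen : ∀ v, IsOpen (sys.Ki v))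
    (hdini : ∀ e, DiniContinuous fun x : sys.Ki (sys.edgeI e) => sys.p e (x : K))
    (δ : ℝ) (hδpos : 0 < δ)
    (hδ : ∀ e, ∀ x ∈ sys.Ki (sys.edgeI e), δ ≤ sys.p e x)
    (μ : Measure K) (hμ : sys.IsInvariant μ)
    (huniq : ∀ ν : Measure K, sys.IsInvariant ν → ν = μ) :
    (∀ f : K → ℝ, Continuous f → (∃ B, ∀ x, |f x| ≤ B) →
      (∀ x : K, Filter.Tendsto (fun n : ℕ => (Uop sys)^[n] f x)
        Filter.atTop (nhds (∫ y, f y ∂μ))) ∧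
      ∀ s : Set K, Bornology.IsBounded s →
        TendstoUniformlyOn (fun n : ℕ => (Uop sys)^[n] f) (fun _ => ∫ y, f y ∂μ)
          Filter.atTop s) ∧
    ∀ ν : Measure K, IsProbabilityMeasure ν →
      ∀ f : K → ℝ, Continuous f → (∃ B, ∀ x, |f x| ≤ B) →
        Filter.Tendsto (fun n : ℕ => ∫ x, f x ∂((Ustar sys)^[n] ν))
          Filter.atTop (nhds (∫ x, f x ∂μ)) := by
  have := hμ.1
  obtain ⟨x₀⟩ : Nonempty K := nonempty_of_isProbabilityMeasure μ
  have hpt : ∀ f : K → ℝ, Continuous f → (∃ B, ∀ x, |f x| ≤ B) → ∀ x : K,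
      Tendsto (fun n : ℕ => (Uop sys)^[n] f x) atTop (nhds (∫ y, f y ∂μ)) := by
    rintro f hf ⟨B, hB⟩ x
    have hB0 : 0 ≤ B := (abs_nonneg _).trans (hB x₀)
    have hmeas := fun n : ℕ => MarkovSystem.measurable_iterate_Uop (sys := sys) hf.measurable n
    have hbound := fun n : ℕ => MarkovSystem.abs_iterate_Uop_le (sys := sys) hB n
    have hlim : Tendsto (fun n : ℕ => ∫ y, ((Uop sys)^[n] f x - (Uop sys)^[n] f y) ∂μ) atTop
        (nhds (∫ _, (0 : ℝ) ∂μ)) := by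
      refine tendsto_integral_of_dominated_convergence (fun _ => 2 * B)
        (fun n => ((hmeas n).const_sub _).aestronglyMeasurable) (integrable_const _)
        (fun n => Eventually.of_forall fun y => ?_) (Eventually.of_forall fun y =>
          MarkovSystem.tendsto_iterate_Uop_sub hcontr ha0 ha1 hirred haper hrelcpt hdini
            hδpos hδ hf hB0 hB x y)
      rw [Real.norm_eq_abs]
      linarith [abs_sub ((Uop sys)^[n] f x) ((Uop sys)^[n] f y), hbound n x, hbound n y]
    have heq : ∀ n : ℕ, ∫ y, ((Uop sys)^[n] f x - (Uop sys)^[n] f y) ∂μ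
        = (Uop sys)^[n] f x - ∫ y, f y ∂μ := fun n => by
      rw [integral_sub (integrable_const _) (Integrable.of_bound
        (hmeas n).aestronglyMeasurable B (Eventually.of_forall (hbound n))),
        hμ.integral_iterate_Uop hf.measurable hB n]
      simp
    simp only [heq, integral_zero] at hlim
    simpa using hlim.add_const (∫ y, f y ∂μ)
  refine ⟨fun f hf hfB => ⟨hpt f hf hfB, fun s hs => ?_⟩, ?_⟩
  · refine TendstoUniformlyOn.mono ?_ subset_closure
    refine (tendstoLocallyUniformlyOn_iff_tendstoUniformlyOn_of_compact (hrelcpt s hs)).1 ?_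
    refine Metric.tendstoLocallyUniformlyOn_iff.2 fun ε hε x _ => ?_
    obtain ⟨B, hB⟩ := hfB
    have hB0 : 0 ≤ B := (abs_nonneg _).trans (hB x₀)
    obtain ⟨η, hη, hloc⟩ := MarkovSystem.exists_asymptotic_equicontinuity hcontr ha0 ha1 hrelcpt
      hdini hδpos hδ hf hB0 hB (half_pos hε)
    obtain ⟨n₀, hn₀⟩ := hloc x
    refine ⟨Metric.ball x η ∩ sys.Ki (sys.vert x), mem_nhdsWithin_of_mem_nhds
      (inter_mem (Metric.ball_mem_nhds x hη) ((hopen _).mem_nhds (sys.mem_Ki_vert x))), ?_⟩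
    filter_upwards [eventually_ge_atTop n₀,
      Metric.tendsto_nhds.1 (hpt f hf ⟨B, hB⟩ x) (ε / 2) (half_pos hε)] with n hn hnx y hy
    have h1 := hn₀ n hn y (MarkovSystem.vert_eq hy.2).symm (Metric.mem_ball'.1 hy.1)
    rw [← Real.dist_eq] at h1
    rw [dist_comm]
    linarith [dist_triangle_left ((Uop sys)^[n] f y) (∫ y, f y ∂μ) ((Uop sys)^[n] f x)]
  · rintro ν hν f hf ⟨B, hB⟩
    simp only [MarkovSystem.integral_iterate_Ustar ν hf.measurable hB]
    have hlim : Tendsto (fun n : ℕ => ∫ x, (Uop sys)^[n] f x ∂ν) atTop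
        (nhds (∫ _, (∫ y, f y ∂μ) ∂ν)) :=
      tendsto_integral_of_dominated_convergence (fun _ => B)
        (fun n => (MarkovSystem.measurable_iterate_Uop hf.measurable n).aestronglyMeasurable)
        (integrable_const _)
        (fun n => Eventually.of_forall (MarkovSystem.abs_iterate_Uop_le hB n))
        (Eventually.of_forall (hpt f hf ⟨B, hB⟩))
    simpa using hlim
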